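/- The class of Gorenstein weak injective R-modules is injectively resolving: it contains all injective modules, and for any short exact sequence 0 → L → M → N → 0 with L Gorenstein weak injective, M is Gorenstein weak injective if and only if N is. -/

import Mathlib

open CategoryTheory

universe u

noncomputable section

variable (R : Type u) [Ring R]

/-- Vanishing of `Ext^n_R(N, M)` for left `R`-modules, expressed via the `Ext` bifunctor
on the `ℤ`-linear abelian category `ModuleCat R`. -/
def ExtVanish (n : ℕ) (N M : ModuleCat.{u} R) : Prop :=
  Subsingleton (((_root_.Ext ℤ (ModuleCat.{u} R) n).obj (Opposite.op N)).obj M)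

/-- An `R`-module is super finitely presented if it admits a resolution by
finitely generated projective modules. -/
def SuperFinitelyPresented (N : ModuleCat.{u} R) : Prop :=
  ∃ (F : ℕ → ModuleCat.{u} R) (d : ∀ n, F (n + 1) →ₗ[R] F n) (ε : F 0 →ₗ[R] N),
    (∀ n, Module.Finite R (F n)) ∧ (∀ n, Module.Projective R (F n)) ∧
    Function.Surjective ε ∧ Function.Exact (d 0) ε ∧
    (∀ n, Function.Exact (d (n + 1)) (d n))

/-- An `R`-module `W` is weak injective if `Ext^1_R(N, W) = 0` for every super finitely
presented module `N`. -/
def WeakInjective (W : ModuleCat.{u} R) : Prop :=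
  ∀ N : ModuleCat.{u} R, SuperFinitelyPresented R N → ExtVanish R 1 N W

/-- `wid_R M ≤ n` : `Ext^{n+1}_R(N, M) = 0` for every super finitely presented `N`. -/
def WidLE (M : ModuleCat.{u} R) (n : ℕ) : Prop :=
  ∀ N : ModuleCat.{u} R, SuperFinitelyPresented R N → ExtVanish R (n + 1) N M

/-- The weak injective dimension, as an element of `ℕ∞`. -/
def Wid (M : ModuleCat.{u} R) : ℕ∞ :=
  sInf {c : ℕ∞ | ∃ n : ℕ, c = n ∧ WidLE R M n}

/-- A doubly infinite exact complex of injective modules which stays exact after applying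
`Hom_R(W, -)` for every module `W` in the test class `𝒯`. -/
def IsTotallyAcyclicInjComplex (𝒯 : ModuleCat.{u} R → Prop)
    (I : ℤ → ModuleCat.{u} R) (d : ∀ n : ℤ, I n →ₗ[R] I (n + 1)) : Prop :=
  (∀ n, Module.Injective R (I n)) ∧
  (∀ n, Function.Exact (d n) (d (n + 1))) ∧
  (∀ W : ModuleCat.{u} R, 𝒯 W → ∀ n,
    Function.Exact (fun g : W →ₗ[R] I n => (d n).comp g)
      (fun g : W →ₗ[R] I (n + 1) => (d (n + 1)).comp g))

/-- `M` is Gorenstein injective relative to the test class `𝒯` : `M` is the cokernel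
`Coker (I_1 → I_0)` of a `Hom(𝒯, -)`-exact exact complex of injective modules. -/
def GorensteinRelInjective (𝒯 : ModuleCat.{u} R → Prop) (M : ModuleCat.{u} R) : Prop :=
  ∃ (I : ℤ → ModuleCat.{u} R) (d : ∀ n : ℤ, I n →ₗ[R] I (n + 1)) (π : I 0 →ₗ[R] M),
    IsTotallyAcyclicInjComplex R 𝒯 I d ∧
    Function.Surjective π ∧ Function.Exact (d (-1)) π

/-- Gorenstein weak injective modules: the test class is that of weak injective modules. -/
def GorensteinWeakInjective (M : ModuleCat.{u} R) : Prop :=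
  GorensteinRelInjective R (WeakInjective R) M

/-- Gorenstein injective modules: the test class is that of injective modules. -/
def GorensteinInjective (M : ModuleCat.{u} R) : Prop :=
  GorensteinRelInjective R (fun E => Module.Injective R E) M

/-- The data of an exact sequence `0 → M → G^0 → ⋯ → G^n → 0` (the modules `G^i` for
`i > n` being trivial). -/
def IsFiniteCoresolution (M : ModuleCat.{u} R) (n : ℕ) (G : ℕ → ModuleCat.{u} R)
    (d : ∀ i, G i →ₗ[R] G (i + 1)) (ε : M →ₗ[R] G 0) : Prop :=
  Function.Injective ε ∧ Function.Exact ε (d 0) ∧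
  (∀ i, Function.Exact (d i) (d (i + 1))) ∧
  (∀ i, n < i → ∀ x : G i, x = 0)

/-- `Gwid_R M ≤ n` : `M` has a coresolution of length `n` by Gorenstein weak injective
modules. -/
def GwidLE (M : ModuleCat.{u} R) (n : ℕ) : Prop :=
  ∃ (G : ℕ → ModuleCat.{u} R) (d : ∀ i, G i →ₗ[R] G (i + 1)) (ε : M →ₗ[R] G 0),
    IsFiniteCoresolution R M n G d ε ∧ ∀ i, GorensteinWeakInjective R (G i)

/-- The Gorenstein weak injective dimension, as an element of `ℕ∞`. -/
def Gwid (M : ModuleCat.{u} R) : ℕ∞ :=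
  sInf {c : ℕ∞ | ∃ n : ℕ, c = n ∧ GwidLE R M n}

/-- `Gid_R M ≤ n`, via coresolutions by Gorenstein injective modules. -/
def GidLE (M : ModuleCat.{u} R) (n : ℕ) : Prop :=
  ∃ (G : ℕ → ModuleCat.{u} R) (d : ∀ i, G i →ₗ[R] G (i + 1)) (ε : M →ₗ[R] G 0),
    IsFiniteCoresolution R M n G d ε ∧ ∀ i, GorensteinInjective R (G i)

/-- The Gorenstein injective dimension, as an element of `ℕ∞`. -/
def Gid (M : ModuleCat.{u} R) : ℕ∞ :=
  sInf {c : ℕ∞ | ∃ n : ℕ, c = n ∧ GidLE R M n}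

/-- `id_R M ≤ n`, via coresolutions by injective modules. -/
def IdLE (M : ModuleCat.{u} R) (n : ℕ) : Prop :=
  ∃ (G : ℕ → ModuleCat.{u} R) (d : ∀ i, G i →ₗ[R] G (i + 1)) (ε : M →ₗ[R] G 0),
    IsFiniteCoresolution R M n G d ε ∧ ∀ i, Module.Injective R (G i)

/-- The injective dimension, as an element of `ℕ∞`. -/
def Idim (M : ModuleCat.{u} R) : ℕ∞ :=
  sInf {c : ℕ∞ | ∃ n : ℕ, c = n ∧ IdLE R M n}

/-- The data of an exact sequence `0 → P_n → ⋯ → P_0 → M → 0`. -/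
def IsFiniteResolution (M : ModuleCat.{u} R) (n : ℕ) (P : ℕ → ModuleCat.{u} R)
    (d : ∀ i, P (i + 1) →ₗ[R] P i) (ε : P 0 →ₗ[R] M) : Prop :=
  Function.Surjective ε ∧ Function.Exact (d 0) ε ∧
  (∀ i, Function.Exact (d (i + 1)) (d i)) ∧
  (∀ i, n < i → ∀ x : P i, x = 0)

/-- `pd_R M ≤ n`, via resolutions by projective modules. -/
def PdLE (M : ModuleCat.{u} R) (n : ℕ) : Prop :=
  ∃ (P : ℕ → ModuleCat.{u} R) (d : ∀ i, P (i + 1) →ₗ[R] P i) (ε : P 0 →ₗ[R] M),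
    IsFiniteResolution R M n P d ε ∧ ∀ i, Module.Projective R (P i)

end

variable (R : Type u) [Ring R]

/-- A short exact sequence `0 → L → M → N → 0` of `R`-modules. -/
def ShortExactSeq (L M N : ModuleCat.{u} R) (f : L →ₗ[R] M) (g : M →ₗ[R] N) : Prop :=
  Function.Injective f ∧ Function.Surjective g ∧ Function.Exact f g

/-- Exactness of `0 → Hom(C, X) → Hom(B, X) → Hom(A, X) → 0` induced by
`0 → A → B → C → 0`. -/
def HomContraExact (X : ModuleCat.{u} R) {A B C : ModuleCat.{u} R}
    (f : A →ₗ[R] B) (g : B →ₗ[R] C) : Prop :=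
  Function.Injective (fun h : C →ₗ[R] X => h.comp g) ∧
  Function.Exact (fun h : C →ₗ[R] X => h.comp g) (fun h : B →ₗ[R] X => h.comp f) ∧
  Function.Surjective (fun h : B →ₗ[R] X => h.comp f)

/-- A short exact sequence is `GWI`-copure exact if `Hom_R(-, X)` leaves it exact for
every Gorenstein weak injective module `X`. -/
def GWICopureExact {A B C : ModuleCat.{u} R} (f : A →ₗ[R] B) (g : B →ₗ[R] C) : Prop :=
  ShortExactSeq R A B C f g ∧
  ∀ X : ModuleCat.{u} R, GorensteinWeakInjective R X → HomContraExact R X f g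

/-- `M` is `GWI`-copure injective if `Hom_R(-, M)` is exact on every `GWI`-copure exact
sequence. -/
def GWICopureInjectiveMod (M : ModuleCat.{u} R) : Prop :=
  ∀ (A B C : ModuleCat.{u} R) (f : A →ₗ[R] B) (g : B →ₗ[R] C),
    GWICopureExact R f g → HomContraExact R M f g

/-- `φ : M → G` is a Gorenstein weak injective preenvelope of `M`. -/
def GWIPreenvelope (M G : ModuleCat.{u} R) (φ : M →ₗ[R] G) : Prop :=
  GorensteinWeakInjective R G ∧
  ∀ G' : ModuleCat.{u} R, GorensteinWeakInjective R G' →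
    ∀ f : M →ₗ[R] G', ∃ g : G →ₗ[R] G', g.comp φ = f

/-- A `WI`-pure Tate injective resolution of `M` : an injective resolution
`0 → M → E^0 → E^1 → ⋯`, a `WI`-pure exact complex `T` of injectives, and a chain map
`u : E → T` which is an isomorphism in all sufficiently large degrees. -/
def WIPureTateInjectiveResolution (M : ModuleCat.{u} R)
    (E : ℕ → ModuleCat.{u} R) (dE : ∀ n, E n →ₗ[R] E (n + 1)) (ε : M →ₗ[R] E 0)
    (T : ℤ → ModuleCat.{u} R) (dT : ∀ n : ℤ, T n →ₗ[R] T (n + 1))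
    (u : ∀ n : ℕ, E n →ₗ[R] T n) : Prop :=
  (∀ n, Module.Injective R (E n)) ∧ Function.Injective ε ∧
  Function.Exact ε (dE 0) ∧ (∀ n, Function.Exact (dE n) (dE (n + 1))) ∧
  IsTotallyAcyclicInjComplex R (WeakInjective R) T dT ∧
  (∀ n : ℕ, (dT n).comp (u n) = (u (n + 1)).comp (dE n)) ∧
  ∃ N : ℕ, ∀ n, N ≤ n → Function.Bijective (u n)

/-- Vanishing of the relative Tate cohomology `Êxt^i_GWI(N, M)` for all `i ∈ ℤ`,
computed from the `WI`-pure exact complex `T` : the complex `Hom_R(N, T)` is exact. -/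
def ExtHatVanishesAll (N : ModuleCat.{u} R) (T : ℤ → ModuleCat.{u} R)
    (dT : ∀ n : ℤ, T n →ₗ[R] T (n + 1)) : Prop :=
  ∀ n : ℤ, Function.Exact (fun g : N →ₗ[R] T n => (dT n).comp g)
    (fun g : N →ₗ[R] T (n + 1) => (dT (n + 1)).comp g)

/-!
Let `𝒯` be a class of objects containing the injectives, and let `𝒯^⊥` be its right
`Ext`-orthogonal. Then `M` is Gorenstein injective relative to `𝒯` if and only if it has a left
resolution by injectives for which `M` and all the syzygies lie in `𝒯^⊥`: such a resolution is
completed by any injective coresolution of `M`, and the cocycles of a `Hom(𝒯, -)`-exact exact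
complex of injectives lie in `𝒯^⊥` by dimension shifting. Such left resolutions can be built one
step at a time. Given `0 → L → M → N → 0`, covers of `L` and `N` combine to a cover of `M` because
`Ext¹(J, L) = 0` for `J` injective. If instead `L` and `M` have resolutions and
`0 → K → E → M → 0` is the first step of the one for `M`, then the kernel `Y` of `E → N` is an
extension of `L` by `K`, so it has a resolution, and `0 → Y → E → N → 0` prolongs it to one of `N`.
-/

section Chains

variable {α : Type*} {r : α → α → Prop} {p q : α → Prop} {a : α}

lemma exists_nat_chain (hp : ∀ a, p a → ∃ b, p b ∧ r a b) (ha : p a) :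
    ∃ s : ℕ → α, s 0 = a ∧ ∀ n, r (s n) (s (n + 1)) := by
  choose! next hnext hr using hp
  have hs : ∀ n, p (next^[n] a) := fun n => by
    induction n with
    | zero => exact ha
    | succ n ih => simpa only [Function.iterate_succ_apply'] using hnext _ ih
  exact ⟨fun n => next^[n] a, rfl, fun n => by
    simpa only [Function.iterate_succ_apply'] using hr _ (hs n)⟩

lemma exists_int_chain (hp : ∀ a, p a → ∃ b, p b ∧ r b a) (hq : ∀ a, q a → ∃ b, q b ∧ r a b)
    (hpa : p a) (hqa : q a) (i : ℤ) : ∃ s : ℤ → α, s i = a ∧ ∀ n, r (s n) (s (n + 1)) := by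
  obtain ⟨l, rfl, hl⟩ := exists_nat_chain (r := fun a b => r b a) hp hpa
  obtain ⟨s, hs, hrs⟩ := exists_nat_chain hq hqa
  let t : ℤ → α
    | .ofNat n => s n
    | .negSucc n => l (n + 1)
  have ht : ∀ n, r (t n) (t (n + 1))
    | .ofNat n => hrs n
    | .negSucc 0 => show r (l 1) (s 0) from hs ▸ hl 0
    | .negSucc (n + 1) => hl (n + 1)
  refine ⟨fun n => t (n - i), by simpa [t] using hs, fun n => ?_⟩
  simpa only [sub_add_eq_add_sub] using ht (n - i)

end Chains

section Extensions

open Limits Abelian ZeroObject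

universe w v

variable {C : Type*} [Category.{v} C] [Abelian C]

/-- `IsExtension A E B` says that `E` is an extension of `B` by `A`, i.e. that there is a short
exact sequence `0 → A → E → B → 0`. -/
def IsExtension (A E B : C) : Prop :=
  ∃ (f : A ⟶ E) (g : E ⟶ B) (w : f ≫ g = 0), (ShortComplex.mk f g w).ShortExact

variable {A B E J K L M N : C}

lemma isExtension_iff_exists_kernel_iso :
    IsExtension A E B ↔ ∃ g : E ⟶ B, Epi g ∧ Nonempty (A ≅ kernel g) := by
  refine ⟨fun ⟨f, g, w, h⟩ => ⟨g, h.epi_g, ⟨?_⟩⟩, fun ⟨g, _, ⟨e⟩⟩ => ?_⟩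
  · exact h.fIsKernel.conePointUniqueUpToIso (limit.isLimit _)
  · exact ⟨e.hom ≫ kernel.ι g, g, by simp,
      .mk' (ShortComplex.exact_of_f_is_kernel _ (kernel.isoKernel g _ e rfl)) inferInstance
        inferInstance⟩

lemma isExtension_zero_left (B : C) : IsExtension 0 B B :=
  isExtension_iff_exists_kernel_iso.2
    ⟨𝟙 B, inferInstance, ⟨(isZero_zero C).iso (isZero_kernel_of_mono (𝟙 B))⟩⟩

namespace IsExtension

lemma of_isPullback {X Y Z W : C} {t : X ⟶ Y} {l : X ⟶ Z} {r : Y ⟶ W} {b : Z ⟶ W} [Epi b]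
    (sq : IsPullback t l r b) (e : A ≅ kernel b) : IsExtension A X Y := by
  have := isIso_kernel_map_of_isPullback sq
  have : Epi t := epi_fst_of_isLimit _ _ sq.isLimit
  exact isExtension_iff_exists_kernel_iso.2 ⟨t, this, ⟨e ≪≫ (asIso (kernel.map _ _ _ _ sq.w)).symm⟩⟩

lemma exists_pullback (h : IsExtension L M N) (h' : IsExtension B J N) :
    ∃ P, IsExtension L P J ∧ IsExtension B P M := by
  obtain ⟨p, _, ⟨e⟩⟩ := isExtension_iff_exists_kernel_iso.1 h
  obtain ⟨q, _, ⟨e'⟩⟩ := isExtension_iff_exists_kernel_iso.1 h'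
  have sq := IsPullback.of_hasPullback p q
  exact ⟨pullback p q, of_isPullback sq.flip e, of_isPullback sq e'⟩

lemma exists_preimage (h : IsExtension L M N) (h' : IsExtension K E M) :
    ∃ Y, IsExtension K Y L ∧ IsExtension Y E N := by
  obtain ⟨f, p, w, h⟩ := h
  obtain ⟨q, _, ⟨e⟩⟩ := isExtension_iff_exists_kernel_iso.1 h'
  have : Mono f := h.mono_f
  have : Epi p := h.epi_g
  have sq := IsPullback.of_hasPullback f q
  have hw : pullback.snd f q ≫ q ≫ p = 0 := by rw [← pullback.condition_assoc, w, comp_zero]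
  refine ⟨pullback f q, of_isPullback sq e, pullback.snd f q, q ≫ p, hw,
    .mk' (ShortComplex.exact_of_f_is_kernel _ (KernelFork.IsLimit.ofι' _ _ fun k hk => ?_))
      inferInstance inferInstance⟩
  have hk' : (k ≫ q) ≫ p = 0 := (Category.assoc _ _ _).trans hk
  exact ⟨pullback.lift (h.exact.lift (k ≫ q) hk') k (h.exact.lift_f _ hk'),
    pullback.lift_snd _ _ _⟩

lemma injective [Injective A] [Injective B] (h : IsExtension A E B) : Injective E := by
  obtain ⟨f, g, w, h⟩ := h
  have s := ShortComplex.ShortExact.splittingOfInjective h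
  exact .of_iso s.isoBinaryBiproduct.symm inferInstance

end IsExtension

section Ext

variable [HasExt.{w} C] {S : ShortComplex C} {W : C}

lemma exists_comp_eq_of_subsingleton_ext_one (hS : S.ShortExact) (h : Subsingleton (Ext W S.X₁ 1))
    (φ : W ⟶ S.X₃) : ∃ ψ : W ⟶ S.X₂, ψ ≫ S.g = φ := by
  obtain ⟨x, hx⟩ := Ext.covariant_sequence_exact₃ W hS (.mk₀ φ) (zero_add 1) (h.elim _ _)
  obtain ⟨ψ, rfl⟩ := (Ext.mk₀_bijective _ _).2 x
  exact ⟨ψ, (Ext.mk₀_bijective _ _).1 (by rwa [Ext.mk₀_comp_mk₀] at hx)⟩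

lemma subsingleton_ext_one_of_exists_comp_eq (hS : S.ShortExact)
    (h : Subsingleton (Ext W S.X₂ 1)) (hlift : ∀ φ : W ⟶ S.X₃, ∃ ψ : W ⟶ S.X₂, ψ ≫ S.g = φ) :
    Subsingleton (Ext W S.X₁ 1) := by
  refine subsingleton_of_forall_eq 0 fun x => ?_
  obtain ⟨y, rfl⟩ := Ext.covariant_sequence_exact₁ W hS x (h.elim _ _) (zero_add 1)
  obtain ⟨φ, rfl⟩ := (Ext.mk₀_bijective _ _).2 y
  obtain ⟨ψ, rfl⟩ := hlift φ
  rw [← Ext.mk₀_comp_mk₀, Ext.comp_assoc_of_second_deg_zero, hS.comp_extClass, Ext.comp_zero]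

namespace IsExtension

lemma subsingleton_ext_left {n : ℕ} (h : IsExtension A E B) (hE : Subsingleton (Ext W E (n + 1)))
    (hB : Subsingleton (Ext W B n)) : Subsingleton (Ext W A (n + 1)) := by
  obtain ⟨f, g, w, hS⟩ := h
  refine subsingleton_of_forall_eq 0 fun x => ?_
  obtain ⟨y, rfl⟩ := Ext.covariant_sequence_exact₁ W hS x (hE.elim _ _) rfl
  rw [hB.elim y 0, Ext.zero_comp]

lemma subsingleton_ext_middle {n : ℕ} (h : IsExtension A E B) (hA : Subsingleton (Ext W A n))
    (hB : Subsingleton (Ext W B n)) : Subsingleton (Ext W E n) := by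
  obtain ⟨f, g, w, hS⟩ := h
  refine subsingleton_of_forall_eq 0 fun x => ?_
  obtain ⟨y, rfl⟩ := Ext.covariant_sequence_exact₂ W hS x (hB.elim _ _)
  rw [hA.elim y 0, Ext.zero_comp]

lemma subsingleton_ext_right {n : ℕ} (h : IsExtension A E B)
    (hA : Subsingleton (Ext W A (n + 1))) (hE : Subsingleton (Ext W E n)) :
    Subsingleton (Ext W B n) := by
  obtain ⟨f, g, w, hS⟩ := h
  refine subsingleton_of_forall_eq 0 fun x => ?_
  obtain ⟨y, rfl⟩ := Ext.covariant_sequence_exact₃ W hS x rfl (hA.elim _ _)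
  rw [hE.elim y 0, Ext.zero_comp]

lemma symm_of_subsingleton_ext_one (h : IsExtension A E B)
    (hAB : Subsingleton (Ext B A 1)) : IsExtension B E A := by
  obtain ⟨f, g, w, hS⟩ := h
  obtain ⟨s, hs⟩ := exists_comp_eq_of_subsingleton_ext_one hS hAB (𝟙 B)
  let σ := ShortComplex.Splitting.ofExactOfSection _ hS.exact s hs hS.mono_f
  let τ : (ShortComplex.mk σ.s σ.r σ.s_r).Splitting :=
    ⟨g, f, σ.s_g, σ.f_r, (add_comm _ _).trans σ.id⟩
  exact ⟨σ.s, σ.r, σ.s_r, τ.shortExact⟩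

end IsExtension

end Ext

/-- `B` is a cosyzygy of `A`, i.e. the cokernel of a monomorphism from `A` to an injective
object. -/
def IsCosyzygy (A B : C) : Prop :=
  ∃ I, Injective I ∧ IsExtension A I B

variable (A) in
lemma exists_isCosyzygy [EnoughInjectives C] : ∃ B, IsCosyzygy A B :=
  ⟨cokernel (Injective.ι A), Injective.under A, inferInstance, Injective.ι A, cokernel.π _,
    cokernel.condition _, .mk' (ShortComplex.exact_cokernel _) inferInstance inferInstance⟩

/-- A horseshoe lemma. The extension `P = M ×_N J` of `J` by `L` splits, which gives a
map `P → L` along which the cover `I → L` can be pulled back to a cover of `P`, hence of `M`. -/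
lemma IsExtension.exists_isExtension_isCosyzygy [HasExt.{w} C] (h : IsExtension L M N)
    (hL : IsCosyzygy A L) (hN : IsCosyzygy B N)
    (hExt : ∀ J : C, Injective J → Subsingleton (Ext J L 1)) :
    ∃ Y, IsExtension A Y B ∧ IsCosyzygy Y M := by
  obtain ⟨I, _, hI⟩ := hL
  obtain ⟨J, hJ', hJ⟩ := hN
  obtain ⟨P, hLPJ, hBPM⟩ := h.exists_pullback hJ
  obtain ⟨E, hJEI, hAEP⟩ := (hLPJ.symm_of_subsingleton_ext_one (hExt J hJ')).exists_pullback hI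
  obtain ⟨Y, hAYB, hYEM⟩ := hBPM.exists_preimage hAEP
  exact ⟨Y, hAYB, E, hJEI.injective, hYEM⟩

section Resolution

variable [HasExt.{w} C] {𝒯 : ObjectProperty C}

/-- The right `Ext`-orthogonal of a class of objects `𝒯`: the objects `M` such that
`Extⁿ(W, M) = 0` for all `W` in `𝒯` and all `n > 0`. -/
def rightExtOrthogonal (𝒯 : ObjectProperty C) : ObjectProperty C :=
  fun M => ∀ W, 𝒯 W → ∀ n : ℕ, Subsingleton (Ext W M (n + 1))

namespace rightExtOrthogonal

lemma of_injective (M : C) [Injective M] : rightExtOrthogonal 𝒯 M :=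
  fun W _ n => Ext.subsingleton_of_injective W M n

lemma of_isExtension (h : IsExtension A E B) (hA : rightExtOrthogonal 𝒯 A)
    (hB : rightExtOrthogonal 𝒯 B) : rightExtOrthogonal 𝒯 E :=
  fun W hW n => h.subsingleton_ext_middle (hA W hW n) (hB W hW n)

lemma of_isCosyzygy (h : IsCosyzygy A B) (hA : rightExtOrthogonal 𝒯 A) :
    rightExtOrthogonal 𝒯 B := by
  obtain ⟨I, _, h⟩ := h
  exact fun W hW n => h.subsingleton_ext_right (hA W hW (n + 1)) (of_injective I W hW n)

end rightExtOrthogonal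

/-- `M` has a left resolution `⋯ → I₁ → I₀ → M → 0` by injective objects such that `M` and all the
syzygies lie in the right `Ext`-orthogonal of `𝒯`. The condition is encoded coinductively, by a
class `P` of objects containing `M` and closed under taking suitable syzygies. -/
def IsLeftResolvable (𝒯 : ObjectProperty C) (M : C) : Prop :=
  ∃ P : ObjectProperty C, P M ∧
    ∀ Y, P Y → rightExtOrthogonal 𝒯 Y ∧ ∃ K, P K ∧ IsCosyzygy K Y

namespace IsLeftResolvable

protected lemma rightExtOrthogonal : IsLeftResolvable 𝒯 M → rightExtOrthogonal 𝒯 M :=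
  fun ⟨_, hM, hP⟩ => (hP M hM).1

protected lemma exists_isCosyzygy :
    IsLeftResolvable 𝒯 M → ∃ K, IsLeftResolvable 𝒯 K ∧ IsCosyzygy K M :=
  fun ⟨P, hM, hP⟩ => (hP M hM).2.imp fun _ ⟨hK, hKM⟩ => ⟨⟨P, hK, hP⟩, hKM⟩

lemma of_isCosyzygy (h : IsCosyzygy K M) (hK : IsLeftResolvable 𝒯 K) : IsLeftResolvable 𝒯 M := by
  refine ⟨fun Y => ∃ K, IsLeftResolvable 𝒯 K ∧ IsCosyzygy K Y, ⟨K, hK, h⟩, ?_⟩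
  rintro Y ⟨K, hK, hKY⟩
  exact ⟨.of_isCosyzygy hKY hK.rightExtOrthogonal, K, hK.exists_isCosyzygy, hKY⟩

lemma of_injective (M : C) [Injective M] : IsLeftResolvable 𝒯 M :=
  ⟨isInjective C, ‹_›, fun Y _ =>
    ⟨.of_injective Y, 0, Injective.zero_injective, Y, ‹_›, isExtension_zero_left Y⟩⟩

lemma of_isExtension (h𝒯 : isInjective C ≤ 𝒯) (h : IsExtension L M N)
    (hL : IsLeftResolvable 𝒯 L) (hN : IsLeftResolvable 𝒯 N) : IsLeftResolvable 𝒯 M := by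
  refine ⟨fun Y => ∃ L N, IsLeftResolvable 𝒯 L ∧ IsLeftResolvable 𝒯 N ∧ IsExtension L Y N,
    ⟨L, N, hL, hN, h⟩, ?_⟩
  rintro Y ⟨L, N, hL, hN, h⟩
  obtain ⟨A, hA, hAL⟩ := hL.exists_isCosyzygy
  obtain ⟨B, hB, hBN⟩ := hN.exists_isCosyzygy
  obtain ⟨K, hK, hKY⟩ := h.exists_isExtension_isCosyzygy hAL hBN fun J hJ =>
    hL.rightExtOrthogonal J (h𝒯 J hJ) 0
  exact ⟨.of_isExtension h hL.rightExtOrthogonal hN.rightExtOrthogonal, K, ⟨A, B, hA, hB, hK⟩, hKY⟩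

lemma right_of_isExtension (h𝒯 : isInjective C ≤ 𝒯) (h : IsExtension L M N)
    (hL : IsLeftResolvable 𝒯 L) (hM : IsLeftResolvable 𝒯 M) : IsLeftResolvable 𝒯 N := by
  obtain ⟨K, hK, E, hE, hKEM⟩ := hM.exists_isCosyzygy
  obtain ⟨Y, hKYL, hYEN⟩ := h.exists_preimage hKEM
  exact .of_isCosyzygy ⟨E, hE, hYEN⟩ (.of_isExtension h𝒯 hKYL hK hL)

lemma exists_isCosyzygy_chain [EnoughInjectives C] (h : IsLeftResolvable 𝒯 M) (i : ℤ) :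
    ∃ K : ℤ → C, K i = M ∧
      ∀ n, rightExtOrthogonal 𝒯 (K n) ∧ IsCosyzygy (K n) (K (n + 1)) :=
  exists_int_chain (r := fun A B => rightExtOrthogonal 𝒯 A ∧ IsCosyzygy A B)
    (fun _ h => h.exists_isCosyzygy.imp fun _ ⟨hK, hKM⟩ => ⟨hK, hK.rightExtOrthogonal, hKM⟩)
    (fun A hA => (exists_isCosyzygy A).imp fun _ hAB => ⟨.of_isCosyzygy hAB hA, hA, hAB⟩)
    h h.rightExtOrthogonal i

end IsLeftResolvable

end Resolution

end Extensions

section Modules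

variable {R} {𝒯 : ObjectProperty (ModuleCat.{u} R)}

namespace ShortExactSeq

variable {A B D I J L M N W : ModuleCat.{u} R} {f : L →ₗ[R] M} {g : M →ₗ[R] N}

lemma shortExact (h : ShortExactSeq R L M N f g) :
    (ModuleCat.shortComplexOfCompEqZero f g h.2.2.linearMap_comp_eq_zero).ShortExact :=
  ModuleCat.shortComplex_shortExact _ h.2.2 h.1 h.2.1

lemma isExtension (h : ShortExactSeq R L M N f g) : IsExtension L M N :=
  ⟨_, _, _, h.shortExact⟩

lemma exists_comp_left_eq (h : ShortExactSeq R L M N f g) {φ : W →ₗ[R] M} (hφ : g.comp φ = 0) :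
    ∃ ψ : W →ₗ[R] L, f.comp ψ = φ := by
  have hφ' : ModuleCat.ofHom φ ≫ ModuleCat.ofHom g = 0 := ModuleCat.hom_ext hφ
  have := h.shortExact.mono_f
  exact ⟨(h.shortExact.exact.lift _ hφ').hom,
    congrArg ModuleCat.Hom.hom (h.shortExact.exact.lift_f _ hφ')⟩

lemma exists_comp_right_eq (h : ShortExactSeq R L M N f g)
    (hW : Subsingleton (Abelian.Ext W L 1)) (φ : W →ₗ[R] N) : ∃ ψ : W →ₗ[R] M, g.comp ψ = φ := by
  obtain ⟨ψ, hψ⟩ := exists_comp_eq_of_subsingleton_ext_one h.shortExact hW (ModuleCat.ofHom φ)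
  exact ⟨ψ.hom, congrArg ModuleCat.Hom.hom hψ⟩

variable {ι : A →ₗ[R] I} {p : I →ₗ[R] B} {ι' : B →ₗ[R] J} {p' : J →ₗ[R] D}

lemma exact_comp (h : ShortExactSeq R A I B ι p) (h' : ShortExactSeq R B J D ι' p') :
    Function.Exact (ι'.comp p) p' :=
  h.2.1.comp_exact_iff_exact.2 h'.2.2

lemma exact_hom_comp (h : ShortExactSeq R A I B ι p) (h' : ShortExactSeq R B J D ι' p')
    (hW : Subsingleton (Abelian.Ext W A 1)) :
    Function.Exact (fun φ : W →ₗ[R] I => (ι'.comp p).comp φ) (fun φ : W →ₗ[R] J => p'.comp φ) := by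
  refine fun φ => ⟨fun hφ => ?_, ?_⟩
  · obtain ⟨χ, rfl⟩ := h'.exists_comp_left_eq hφ
    obtain ⟨ψ, rfl⟩ := h.exists_comp_right_eq hW χ
    exact ⟨ψ, rfl⟩
  · rintro ⟨ψ, rfl⟩
    exact congrArg (·.comp (p.comp ψ)) h'.2.2.linearMap_comp_eq_zero

end ShortExactSeq

lemma isCosyzygy_iff_exists_shortExactSeq {A B : ModuleCat.{u} R} :
    IsCosyzygy A B ↔ ∃ (I : ModuleCat.{u} R) (ι : A →ₗ[R] I) (p : I →ₗ[R] B),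
      Module.Injective R I ∧ ShortExactSeq R A I B ι p := by
  constructor
  · rintro ⟨I, hI, ι, p, w, h⟩
    exact ⟨I, ι.hom, p.hom, (Module.injective_iff_injective_object R I).2 hI,
      h.moduleCat_injective_f, h.moduleCat_surjective_g,
      (ShortComplex.ShortExact.moduleCat_exact_iff_function_exact _).1 h.exact⟩
  · rintro ⟨I, ι, p, hI, h⟩
    exact ⟨I, (Module.injective_iff_injective_object R I).1 hI, h.isExtension⟩

lemma IsLeftResolvable.gorensteinRelInjective {M : ModuleCat.{u} R} (h : IsLeftResolvable 𝒯 M) :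
    GorensteinRelInjective R 𝒯 M := by
  obtain ⟨K, rfl, hK⟩ := h.exists_isCosyzygy_chain 1
  choose I ι p hI hS using fun n => isCosyzygy_iff_exists_shortExactSeq.1 (hK n).2
  refine ⟨I, fun n => (ι (n + 1)).comp (p n), p 0, ⟨hI, fun n => ?_, fun W hW n => ?_⟩,
    (hS 0).2.1, (hS (-1)).exact_comp (hS 0)⟩
  · exact (hS (n + 1 + 1)).1.comp_exact_iff_exact.2 ((hS n).exact_comp (hS (n + 1)))
  · exact ((hS n).exact_hom_comp (hS (n + 1)) ((hK n).1 W hW 0)).comp_injective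
      (g' := fun ψ => (ι (n + 1 + 1)).comp ψ)
      (fun _ _ => (LinearMap.cancel_left (hS (n + 1 + 1)).1).1) (LinearMap.comp_zero _)

namespace IsTotallyAcyclicInjComplex

variable {I : ℤ → ModuleCat.{u} R} {d : ∀ n : ℤ, I n →ₗ[R] I (n + 1)}

lemma apply_mem_ker (h : IsTotallyAcyclicInjComplex R 𝒯 I d) (n : ℤ) (x : I n) :
    d n x ∈ (d (n + 1)).ker :=
  (h.2.1 n).apply_apply_eq_zero x

lemma shortExactSeq_ker (h : IsTotallyAcyclicInjComplex R 𝒯 I d) (n : ℤ) :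
    ShortExactSeq R (.of R (d n).ker) (I n) (.of R (d (n + 1)).ker) (d n).ker.subtype
      ((d n).codRestrict _ (h.apply_mem_ker n)) := by
  refine ⟨Subtype.val_injective, ?_, ?_⟩
  · rintro ⟨y, hy⟩
    obtain ⟨x, rfl⟩ := (h.2.1 n y).1 hy
    exact ⟨x, rfl⟩
  · rw [LinearMap.exact_iff, LinearMap.ker_codRestrict, Submodule.range_subtype]

lemma isCosyzygy_ker (h : IsTotallyAcyclicInjComplex R 𝒯 I d) (n : ℤ) :
    IsCosyzygy (ModuleCat.of R (d n).ker) (.of R (d (n + 1)).ker) :=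
  isCosyzygy_iff_exists_shortExactSeq.2 ⟨_, _, _, h.1 n, h.shortExactSeq_ker n⟩

lemma rightExtOrthogonal_ker (h : IsTotallyAcyclicInjComplex R 𝒯 I d) (n : ℤ) :
    rightExtOrthogonal 𝒯 (.of R (d n).ker) := by
  intro W hW k
  have hI n : rightExtOrthogonal 𝒯 (I n) :=
    have := (Module.injective_iff_injective_object R (I n)).1 (h.1 n)
    .of_injective (I n)
  induction k generalizing n with
  | zero =>
    refine subsingleton_ext_one_of_exists_comp_eq (h.shortExactSeq_ker n).shortExact
      (hI n W hW 0) fun φ => ?_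
    obtain ⟨ψ, hψ⟩ := (h.2.2 W hW n ((d (n + 1)).ker.subtype.comp φ.hom)).1
      (LinearMap.ext fun w => (φ w).2)
    exact ⟨ModuleCat.ofHom ψ, ModuleCat.hom_ext (LinearMap.ext fun w =>
      Subtype.ext (LinearMap.congr_fun hψ w))⟩
  | succ k ih =>
    exact (h.shortExactSeq_ker n).isExtension.subsingleton_ext_left (hI n W hW (k + 1))
      (ih (n + 1))

lemma isLeftResolvable_ker (h : IsTotallyAcyclicInjComplex R 𝒯 I d) (n : ℤ) :
    IsLeftResolvable 𝒯 (.of R (d n).ker) := by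
  refine ⟨fun Y => ∃ n, Y = .of R (d n).ker, ⟨n, rfl⟩, ?_⟩
  rintro _ ⟨m, rfl⟩
  obtain ⟨n, rfl⟩ : ∃ n, m = n + 1 := ⟨m - 1, (sub_add_cancel m 1).symm⟩
  exact ⟨h.rightExtOrthogonal_ker (n + 1), _, ⟨n, rfl⟩, h.isCosyzygy_ker n⟩

end IsTotallyAcyclicInjComplex

lemma GorensteinRelInjective.isLeftResolvable {M : ModuleCat.{u} R}
    (h : GorensteinRelInjective R 𝒯 M) : IsLeftResolvable 𝒯 M := by
  obtain ⟨I, d, π, hd, hπ, hex⟩ := h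
  have hker : (d 0).ker = π.ker :=
    (LinearMap.exact_iff.1 (hd.2.1 (-1))).trans (LinearMap.exact_iff.1 hex).symm
  have hS : ShortExactSeq R (.of R (d 0).ker) (I 0) M (d 0).ker.subtype π := by
    refine ⟨Subtype.val_injective, hπ, ?_⟩
    rw [LinearMap.exact_iff, Submodule.range_subtype, hker]
  exact .of_isCosyzygy (isCosyzygy_iff_exists_shortExactSeq.2 ⟨_, _, _, hd.1 0, hS⟩)
    (hd.isLeftResolvable_ker 0)

theorem gorensteinRelInjective_iff_isLeftResolvable {M : ModuleCat.{u} R} :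
    GorensteinRelInjective R 𝒯 M ↔ IsLeftResolvable 𝒯 M :=
  ⟨GorensteinRelInjective.isLeftResolvable, IsLeftResolvable.gorensteinRelInjective⟩

lemma isZero_ext_succ_of_injective (k : Type*) [Ring k] {C : Type*} [Category C] [Abelian C]
    [Linear k C] [EnoughProjectives C] (X I : C) [Injective I] (n : ℕ) :
    Limits.IsZero (((_root_.Ext k C (n + 1)).obj (.op X)).obj I) := by
  let P := projectiveResolution X
  refine .of_iso ?_ (P.isoExt (R := k) (n + 1) I)
  rw [← HomologicalComplex.exactAt_iff_isZero_homology,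
    HomologicalComplex.exactAt_iff' _ n (n + 1) (n + 2) (by simp) (by simp),
    ShortComplex.moduleCat_exact_iff]
  intro (φ : P.complex.X (n + 1) ⟶ I) (hφ : P.complex.d (n + 2) (n + 1) ≫ φ = 0)
  have hP := (HomologicalComplex.exactAt_iff' _ (n + 2) (n + 1) n (by simp) (by simp)).1
    (P.complex_exactAt_succ n)
  exact ⟨hP.descToInjective φ hφ, hP.comp_descToInjective φ hφ⟩

lemma weakInjective_of_injective (I : ModuleCat.{u} R) (hI : Module.Injective R I) :
    WeakInjective R I := by
  have := (Module.injective_iff_injective_object R I).1 hI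
  exact fun N _ => ModuleCat.subsingleton_of_isZero (isZero_ext_succ_of_injective ℤ N I 0)

end Modules

theorem gorensteinWeakInjective_injectively_resolving_general (𝒯 : ModuleCat.{u} R → Prop)
    (h𝒯 : ∀ I : ModuleCat.{u} R, Module.Injective R I → 𝒯 I) :
    (∀ I : ModuleCat.{u} R, Module.Injective R I → GorensteinRelInjective R 𝒯 I) ∧
    (∀ (L M N : ModuleCat.{u} R) (f : L →ₗ[R] M) (g : M →ₗ[R] N),
      ShortExactSeq R L M N f g → GorensteinRelInjective R 𝒯 L →
      (GorensteinRelInjective R 𝒯 M ↔ GorensteinRelInjective R 𝒯 N)) := by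
  have h𝒯' : isInjective (ModuleCat.{u} R) ≤ 𝒯 :=
    fun I hI => h𝒯 I ((Module.injective_iff_injective_object R I).2 hI)
  simp only [gorensteinRelInjective_iff_isLeftResolvable, Module.injective_iff_injective_object]
  exact ⟨fun I _ => .of_injective I, fun L M N f g h hL =>
    ⟨.right_of_isExtension h𝒯' h.isExtension hL, .of_isExtension h𝒯' h.isExtension hL⟩⟩

/-- The class of Gorenstein weak injective modules is injectively resolving: it contains
all injective modules, and given a short exact sequence `0 → L → M → N → 0` with `L`
Gorenstein weak injective, `M` is Gorenstein weak injective iff `N` is. -/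
theorem gorensteinWeakInjective_injectively_resolving :
    (∀ I : ModuleCat.{u} R, Module.Injective R I → GorensteinWeakInjective R I) ∧
    (∀ (L M N : ModuleCat.{u} R) (f : L →ₗ[R] M) (g : M →ₗ[R] N),
      ShortExactSeq R L M N f g → GorensteinWeakInjective R L →
      (GorensteinWeakInjective R M ↔ GorensteinWeakInjective R N)) :=
  gorensteinWeakInjective_injectively_resolving_general R (WeakInjective R)
    weakInjective_of_injective
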